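/- arXiv:2103.03742 — 14 statements merged into one kernel-verified Lean document; each statement's English description precedes it below -/
import Mathlib

section
/- Let S be a symmetric positive semidefinite real N×N matrix and let P be any real M×N matrix. Suppose T is a real N×N matrix such that for every η ∈ ℝ^N one has P (T η) = 0 and there exists λ ∈ ℝ^M with S (T η) + Pᵀ λ = η. Then T is symmetric and positive semidefinite, and moreover ηᵀ T η = (T η)ᵀ S (T η) for every η ∈ ℝ^N. -/
open Matrix

/-- Any solution operator `T` of the saddle-point system
(`P (T η) = 0` and `S (T η) + Pᵀ λ = η` for some `λ`) is symmetric and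
positive semidefinite, and `ηᵀ T η = (T η)ᵀ S (T η)` for every `η`. -/
theorem saddle_point_solution_operator_symm_psd
    (N M : ℕ) (S : Matrix (Fin N) (Fin N) ℝ) (P : Matrix (Fin M) (Fin N) ℝ)
    (T : Matrix (Fin N) (Fin N) ℝ)
    (hSsymm : S = Sᵀ)
    (hSpsd : ∀ x : Fin N → ℝ, 0 ≤ x ⬝ᵥ S.mulVec x)
    (hTker : ∀ η : Fin N → ℝ, P.mulVec (T.mulVec η) = 0)
    (hTsolve : ∀ η : Fin N → ℝ, ∃ lam : Fin M → ℝ,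
      S.mulVec (T.mulVec η) + Pᵀ.mulVec lam = η) :
    T = Tᵀ ∧ (∀ η : Fin N → ℝ, 0 ≤ η ⬝ᵥ T.mulVec η) ∧
      (∀ η : Fin N → ℝ, η ⬝ᵥ T.mulVec η = (T.mulVec η) ⬝ᵥ S.mulVec (T.mulVec η)) := by
  have key : ∀ η ξ : Fin N → ℝ,
      η ⬝ᵥ T.mulVec ξ = (T.mulVec ξ) ⬝ᵥ S.mulVec (T.mulVec η) := by
    intro η ξ
    obtain ⟨lam, h⟩ := hTsolve η
    have h0 : (T.mulVec ξ) ⬝ᵥ Pᵀ.mulVec lam = 0 := by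
      rw [dotProduct_mulVec, vecMul_transpose, hTker, zero_dotProduct]
    calc η ⬝ᵥ T.mulVec ξ = (T.mulVec ξ) ⬝ᵥ η := dotProduct_comm _ _
      _ = (T.mulVec ξ) ⬝ᵥ (S.mulVec (T.mulVec η) + Pᵀ.mulVec lam) := by rw [h]
      _ = _ := by rw [dotProduct_add, h0, add_zero]
  have hS : ∀ x y : Fin N → ℝ, x ⬝ᵥ S.mulVec y = y ⬝ᵥ S.mulVec x := by
    intro x y
    rw [dotProduct_mulVec, ← mulVec_transpose, ← hSsymm, dotProduct_comm]
  refine ⟨?_, fun η => ?_, fun η => key η η⟩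
  · ext i j
    have h1 := key (Pi.single i 1) (Pi.single j 1)
    have h2 := key (Pi.single j 1) (Pi.single i 1)
    rw [hS, ← h2] at h1
    simpa using h1
  · rw [key]
    exact hSpsd _
end

section
/- Let S be a symmetric positive semidefinite real N×N matrix, let P be a real M×N matrix with linearly independent rows, and assume xᵀ S x > 0 for every x ≠ 0 with P x = 0. Let P* be a real M×N matrix with P (P*)ᵀ = I_M and S (P*)ᵀ = 0. If T is a real N×N matrix such that for every η ∈ ℝ^N one has P (T η) = 0 and η − S (T η) ∈ range(Pᵀ), then T S = I_N − (P*)ᵀ P. -/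
open Matrix

/-- If `P*` satisfies `P (P*)ᵀ = I_M` and `S (P*)ᵀ = 0`, and `T`
is a solution operator of the saddle-point system associated with `S` and `P`,
then `T S = I_N − (P*)ᵀ P`. -/
theorem saddle_point_TS_eq_id_sub_proj
    (N M : ℕ) (S : Matrix (Fin N) (Fin N) ℝ)
    (P Pstar : Matrix (Fin M) (Fin N) ℝ)
    (T : Matrix (Fin N) (Fin N) ℝ)
    (hSsymm : S = Sᵀ)
    (hSpsd : ∀ x : Fin N → ℝ, 0 ≤ x ⬝ᵥ S.mulVec x)
    (hPsurj : Function.Surjective P.mulVec)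
    (hSpos : ∀ x : Fin N → ℝ, P.mulVec x = 0 → x ≠ 0 → 0 < x ⬝ᵥ S.mulVec x)
    (hPPstar : P * Pstarᵀ = 1)
    (hSPstar : S * Pstarᵀ = 0)
    (hTker : ∀ η : Fin N → ℝ, P.mulVec (T.mulVec η) = 0)
    (hTsolve : ∀ η : Fin N → ℝ, ∃ lam : Fin M → ℝ,
      S.mulVec (T.mulVec η) + Pᵀ.mulVec lam = η) :
    T * S = 1 - Pstarᵀ * P := by
  apply Matrix.ext_of_mulVec_single
  intro i
  generalize (Pi.single i (1 : ℝ) : Fin N → ℝ) = x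
  obtain ⟨lam, hlam⟩ := hTsolve (S.mulVec x)
  set d : Fin N → ℝ := T.mulVec (S.mulVec x) - (x - Pstarᵀ.mulVec (P.mulVec x)) with hd
  have hPd : P.mulVec d = 0 := by
    rw [hd, Matrix.mulVec_sub, Matrix.mulVec_sub, hTker, Matrix.mulVec_mulVec, hPPstar,
      Matrix.one_mulVec, sub_self, sub_self]
  have hSd : S.mulVec d = - Pᵀ.mulVec lam := by
    rw [hd, Matrix.mulVec_sub, Matrix.mulVec_sub, Matrix.mulVec_mulVec _ S Pstarᵀ, hSPstar,
      Matrix.zero_mulVec, sub_zero, eq_neg_iff_add_eq_zero, sub_add_eq_add_sub, hlam, sub_self]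
  have hd0 : d = 0 := by
    by_contra h
    have h1 := hSpos d hPd h
    rw [hSd, dotProduct_neg, Matrix.dotProduct_mulVec, Matrix.vecMul_transpose, hPd,
      zero_dotProduct, neg_zero] at h1
    exact lt_irrefl _ h1
  rw [Matrix.sub_mulVec, Matrix.one_mulVec, ← Matrix.mulVec_mulVec, ← Matrix.mulVec_mulVec]
  exact sub_eq_zero.mp hd0
end

section
/- Let S be a symmetric positive semidefinite real N×N matrix, let P be a real M×N matrix with linearly independent rows, and assume xᵀ S x > 0 for every x ≠ 0 with P x = 0. Let P* be a real M×N matrix with P (P*)ᵀ = I_M and S (P*)ᵀ = 0. If T is a real N×N matrix such that for every η ∈ ℝ^N one has P (T η) = 0 and η − S (T η) ∈ range(Pᵀ), then S T S = S and T S T = T; that is, T is a reflexive generalized inverse of S. -/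
open Matrix

/-- Under the same assumptions as Statement 2, the solution
operator `T` is a reflexive generalized inverse of `S`: `S T S = S` and
`T S T = T`. -/
theorem saddle_point_reflexive_generalized_inverse
    (N M : ℕ) (S : Matrix (Fin N) (Fin N) ℝ)
    (P Pstar : Matrix (Fin M) (Fin N) ℝ)
    (T : Matrix (Fin N) (Fin N) ℝ)
    (hSsymm : S = Sᵀ)
    (hSpsd : ∀ x : Fin N → ℝ, 0 ≤ x ⬝ᵥ S.mulVec x)
    (hPsurj : Function.Surjective P.mulVec)
    (hSpos : ∀ x : Fin N → ℝ, P.mulVec x = 0 → x ≠ 0 → 0 < x ⬝ᵥ S.mulVec x)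
    (hPPstar : P * Pstarᵀ = 1)
    (hSPstar : S * Pstarᵀ = 0)
    (hTker : ∀ η : Fin N → ℝ, P.mulVec (T.mulVec η) = 0)
    (hTsolve : ∀ η : Fin N → ℝ, ∃ lam : Fin M → ℝ,
      S.mulVec (T.mulVec η) + Pᵀ.mulVec lam = η) :
    S * T * S = S ∧ T * S * T = T := by
  have h1 : Pstar * S = 0 := by
    have h := congrArg Matrix.transpose hSPstar
    rw [Matrix.transpose_mul, Matrix.transpose_transpose, ← hSsymm, Matrix.transpose_zero] at h
    exact h
  have h2 : Pstar * Pᵀ = 1 := by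
    have h := congrArg Matrix.transpose hPPstar
    rw [Matrix.transpose_mul, Matrix.transpose_transpose, Matrix.transpose_one] at h
    exact h
  have hSTS : S * T * S = S := by
    apply Matrix.ext_of_mulVec_single
    intro i
    set x : Fin N → ℝ := Pi.single i 1
    obtain ⟨lam, hl⟩ := hTsolve (S.mulVec x)
    have h := congrArg Pstar.mulVec hl
    simp only [Matrix.mulVec_add, Matrix.mulVec_mulVec, ← Matrix.mul_assoc, h1, h2, Matrix.zero_mul,
      Matrix.zero_mulVec, zero_add, Matrix.one_mulVec] at h
    rw [h, Matrix.mulVec_zero, add_zero, Matrix.mulVec_mulVec, Matrix.mulVec_mulVec] at hl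
    exact hl
  refine ⟨hSTS, ?_⟩
  apply Matrix.ext_of_mulVec_single
  intro i
  set y : Fin N → ℝ := Pi.single i 1
  by_contra hne
  have hP : P.mulVec ((T * S * T).mulVec y - T.mulVec y) = 0 := by
    rw [Matrix.mulVec_sub, hTker, Matrix.mul_assoc, ← Matrix.mulVec_mulVec, hTker, sub_zero]
  have hS : S.mulVec ((T * S * T).mulVec y - T.mulVec y) = 0 := by
    rw [Matrix.mulVec_sub, Matrix.mulVec_mulVec, Matrix.mulVec_mulVec, ← Matrix.mul_assoc,
      ← Matrix.mul_assoc, hSTS, sub_self]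
  have h := hSpos _ hP (sub_ne_zero.mpr hne)
  rw [hS, dotProduct_zero] at h
  exact lt_irrefl _ h
end

section
/- Let S be a symmetric positive semidefinite real N×N matrix, let P be a real M×N matrix with linearly independent rows, and assume xᵀ S x > 0 for every x ≠ 0 with P x = 0. Let P* be a real M×N matrix with P (P*)ᵀ = I_M and S (P*)ᵀ = 0, and let T be a real N×N matrix such that for every η ∈ ℝ^N one has P (T η) = 0 and η − S (T η) ∈ range(Pᵀ). Then for every η ∈ ℝ^N the pair (w, μ) = (S η, P η) is the unique pair in ℝ^N × ℝ^M satisfying T w + (P*)ᵀ μ = η and P* w = 0. Consequently the reflexive generalized inverse of T constructed from the saddle-point system with constraint matrix P* is S itself (S†† = S). -/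
open Matrix

/-- Under the assumptions of Statement 2, for every `η ∈ ℝ^N`
the pair `(w, μ) = (S η, P η)` is the unique pair satisfying the dual
saddle-point system `T w + (P*)ᵀ μ = η`, `P* w = 0`; consequently the reflexive
generalized inverse of `T` constructed from the saddle-point system with
constraint matrix `P*` is `S` itself (`S†† = S`). -/
theorem saddle_point_double_dagger
    (N M : ℕ) (S : Matrix (Fin N) (Fin N) ℝ)
    (P Pstar : Matrix (Fin M) (Fin N) ℝ)
    (T : Matrix (Fin N) (Fin N) ℝ)
    (hSsymm : S = Sᵀ)
    (hSpsd : ∀ x : Fin N → ℝ, 0 ≤ x ⬝ᵥ S.mulVec x)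
    (hPsurj : Function.Surjective P.mulVec)
    (hSpos : ∀ x : Fin N → ℝ, P.mulVec x = 0 → x ≠ 0 → 0 < x ⬝ᵥ S.mulVec x)
    (hPPstar : P * Pstarᵀ = 1)
    (hSPstar : S * Pstarᵀ = 0)
    (hTker : ∀ η : Fin N → ℝ, P.mulVec (T.mulVec η) = 0)
    (hTsolve : ∀ η : Fin N → ℝ, ∃ lam : Fin M → ℝ,
      S.mulVec (T.mulVec η) + Pᵀ.mulVec lam = η) :
    ∀ η : Fin N → ℝ, ∀ (w : Fin N → ℝ) (μ : Fin M → ℝ),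
      (T.mulVec w + Pstarᵀ.mulVec μ = η ∧ Pstar.mulVec w = 0) ↔
        (w = S.mulVec η ∧ μ = P.mulVec η) := by
  have hQS : Pstar * S = 0 := by
    have h := congrArg Matrix.transpose hSPstar
    rwa [Matrix.transpose_mul, Matrix.transpose_transpose, ← hSsymm,
      Matrix.transpose_zero] at h
  have hQP : Pstar * Pᵀ = 1 := by
    have h := congrArg Matrix.transpose hPPstar
    rwa [Matrix.transpose_mul, Matrix.transpose_transpose, Matrix.transpose_one] at h
  have hQSv : ∀ x, Pstar.mulVec (S.mulVec x) = 0 := fun x => by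
    rw [Matrix.mulVec_mulVec, hQS, Matrix.zero_mulVec]
  have hSQv : ∀ x, S.mulVec (Pstarᵀ.mulVec x) = 0 := fun x => by
    rw [Matrix.mulVec_mulVec, hSPstar, Matrix.zero_mulVec]
  have hPQv : ∀ x, P.mulVec (Pstarᵀ.mulVec x) = x := fun x => by
    rw [Matrix.mulVec_mulVec, hPPstar, Matrix.one_mulVec]
  have hST : ∀ w, Pstar.mulVec w = 0 → S.mulVec (T.mulVec w) = w := by
    intro w hw
    obtain ⟨lam, hl⟩ := hTsolve w
    have h := congrArg Pstar.mulVec hl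
    rw [Matrix.mulVec_add, hQSv, Matrix.mulVec_mulVec, hQP, Matrix.one_mulVec, hw,
      zero_add] at h
    rw [h, Matrix.mulVec_zero, add_zero] at hl
    exact hl
  intro η w μ
  constructor
  · rintro ⟨h1, h2⟩
    subst h1
    constructor
    · rw [Matrix.mulVec_add, hSQv, add_zero, hST w h2]
    · rw [Matrix.mulVec_add, hTker, hPQv, zero_add]
  · rintro ⟨rfl, rfl⟩
    refine ⟨?_, hQSv η⟩
    rw [← sub_eq_zero]
    by_contra hne
    have hpos := hSpos _ (by
      rw [Matrix.mulVec_sub, Matrix.mulVec_add, hTker, hPQv, zero_add, sub_self]) hne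
    have hz : S.mulVec (T.mulVec (S.mulVec η) + Pstarᵀ.mulVec (P.mulVec η) - η) = 0 := by
      rw [Matrix.mulVec_sub, Matrix.mulVec_add, hSQv, add_zero, hST _ (hQSv η), sub_self]
    rw [hz, dotProduct_zero] at hpos
    exact lt_irrefl _ hpos
end

section
/- Under the stated assumptions, for every η in W* with coordinate vector η⃗ (so that η = Σ_n η⃗_n φ_n), one has C_poi⁻² · β² · A⁻¹ · p*(η)² ≤ η⃗ᵀ S† η⃗. (Lower bound of Proposition 2.7: the bilinear form s*(η, ζ) := ζ⃗ᵀ S† η⃗ is coercive with respect to the dual seminorm p*.) -/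
open Matrix

theorem quad_cauchy_aux {N : ℕ} (S : Matrix (Fin N) (Fin N) ℝ) (hSsymm : S = Sᵀ)
    (hSpsd : ∀ x : Fin N → ℝ, 0 ≤ x ⬝ᵥ S.mulVec x) (d x : Fin N → ℝ) :
    (d ⬝ᵥ S.mulVec x)^2 ≤ (d ⬝ᵥ S.mulVec d) * (x ⬝ᵥ S.mulVec x) := by
  have hsym : x ⬝ᵥ S.mulVec d = d ⬝ᵥ S.mulVec x := by
    rw [Matrix.dotProduct_mulVec, ← Matrix.mulVec_transpose, ← hSsymm, dotProduct_comm]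
  have h : ∀ t : ℝ, 0 ≤ (x ⬝ᵥ S.mulVec x) * (t * t) + (2 * (d ⬝ᵥ S.mulVec x)) * t
      + d ⬝ᵥ S.mulVec d := by
    intro t
    have := hSpsd (d + t • x)
    simp only [Matrix.mulVec_add, Matrix.mulVec_smul, add_dotProduct, dotProduct_add,
      smul_dotProduct, dotProduct_smul, smul_eq_mul, hsym] at this
    linarith
  have := discrim_le_zero h
  unfold discrim at this
  linarith

/-- lower bound of Proposition 2.7. With `S†` the reflexive
generalized inverse of the stiffness matrix `S` obtained from the saddle-point
system with constraint matrix `P`, the bilinear form `s*(η,ζ) := ζ⃗ᵀ S† η⃗` on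
`W*` is coercive with respect to the dual seminorm `p*`:
`C_poi⁻² · β² · A⁻¹ · p*(η)² ≤ η⃗ᵀ S† η⃗`. -/
theorem dual_bilinear_form_coercive
    {V : Type*} [NormedAddCommGroup V] [InnerProductSpace ℝ V] [CompleteSpace V]
    (p : Seminorm ℝ V) (hple : ∀ v : V, p v ≤ ‖v‖)
    (Pih : V →L[ℝ] V) (hidem : ∀ v : V, Pih (Pih v) = Pih v)
    (hrange : ∀ v : V, p v = 0 ↔ ∃ u : V, Pih u = v)
    (Cpoi : ℝ) (hCpoi : 0 < Cpoi)
    (hpoincare : ∀ v : V, Pih v = 0 → ‖v‖ ≤ Cpoi * p v)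
    (pstar : (V →L[ℝ] ℝ) → ℝ)
    (hpstar : ∀ η : V →L[ℝ] ℝ,
      pstar η = sSup ((fun v => η v / p v) '' {v : V | Pih v = 0 ∧ v ≠ 0}))
    (N M : ℕ) (e : Fin N → V) (φ : Fin N → (V →L[ℝ] ℝ))
    (hbiorth : ∀ n m, φ n (e m) = if n = m then 1 else 0)
    -- `Ŵ ⊆ W`: the range of `Π̂` is contained in `W = span (e₁, …, e_N)`
    (hWhat : ∀ u : V, Pih u ∈ Submodule.span ℝ (Set.range e))
    -- `η ∘ Π̂ ∈ W*` for every `η ∈ W* = span (φ₁, …, φ_N)`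
    (hWstarPih : ∀ η : V →L[ℝ] ℝ, η ∈ Submodule.span ℝ (Set.range φ) →
      η.comp Pih ∈ Submodule.span ℝ (Set.range φ))
    -- inf-sup condition between `W*` and `W`
    (β : ℝ) (hβ : 0 < β)
    (hinfsup : ∀ η : V →L[ℝ] ℝ, η ∈ Submodule.span ℝ (Set.range φ) →
      β * ‖η‖ ≤ sSup ((fun w : V => η w / ‖w‖) ''
        {w : V | w ∈ Submodule.span ℝ (Set.range e) ∧ w ≠ 0}))
    -- `ê` is a basis of `Ŵ = range Π̂`, and `Π̂ v = Σᵢ ê*ᵢ(v) êᵢ`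
    (ehat : Fin M → V) (ehatstar : Fin M → (V →L[ℝ] ℝ))
    (hehat_indep : LinearIndependent ℝ ehat)
    (hehat_span : ∀ v : V, (∃ u : V, Pih u = v) ↔
      v ∈ Submodule.span ℝ (Set.range ehat))
    (hPih_repr : ∀ v : V, Pih v = ∑ i, (ehatstar i v) • ehat i)
    -- the matrix `P` with entries `P i m = ê*ᵢ(e_m)`
    (P : Matrix (Fin M) (Fin N) ℝ) (hP : ∀ i m, P i m = ehatstar i (e m))
    -- the stiffness matrix `S`: symmetric, positive semidefinite, and
    -- coercive/continuous with respect to `p` in the coordinates of `W`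
    (S : Matrix (Fin N) (Fin N) ℝ)
    (hSsymm : S = Sᵀ)
    (hSpsd : ∀ x : Fin N → ℝ, 0 ≤ x ⬝ᵥ S.mulVec x)
    (α A : ℝ) (hα : 0 < α) (hA : 0 < A)
    (hS_coercive : ∀ c : Fin N → ℝ, α * (p (∑ n, c n • e n))^2 ≤ c ⬝ᵥ S.mulVec c)
    (hS_cont : ∀ c d : Fin N → ℝ,
      d ⬝ᵥ S.mulVec c ≤ A * p (∑ n, c n • e n) * p (∑ n, d n • e n))
    -- `S†` solves the saddle-point system: `P (S† ξ) = 0` and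
    -- `ξ − S (S† ξ) ∈ range Pᵀ`
    (Sdag : Matrix (Fin N) (Fin N) ℝ)
    (hSdag_ker : ∀ ξ : Fin N → ℝ, P.mulVec (Sdag.mulVec ξ) = 0)
    (hSdag_solve : ∀ ξ : Fin N → ℝ, ∃ lam : Fin M → ℝ,
      ξ - S.mulVec (Sdag.mulVec ξ) = Pᵀ.mulVec lam) :
    ∀ c : Fin N → ℝ,
      Cpoi⁻¹^2 * β^2 * A⁻¹ * (pstar (∑ n, c n • φ n))^2 ≤ c ⬝ᵥ Sdag.mulVec c := by
  intro c
  obtain ⟨lam, hlam⟩ := hSdag_solve c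
  have hker := hSdag_ker c
  set x := Sdag.mulVec c with hx
  have hc : c = S.mulVec x + Pᵀ.mulVec lam := by rw [← hlam]; abel
  have hPt : ∀ d : Fin N → ℝ, P.mulVec d = 0 → d ⬝ᵥ Pᵀ.mulVec lam = 0 := by
    intro d hd
    rw [Matrix.dotProduct_mulVec, Matrix.vecMul_transpose, hd, zero_dotProduct]
  have hdc : ∀ d : Fin N → ℝ, P.mulVec d = 0 → d ⬝ᵥ c = d ⬝ᵥ S.mulVec x := by
    intro d hd
    conv_lhs => rw [hc]
    rw [dotProduct_add, hPt d hd, add_zero]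
  have hq : c ⬝ᵥ x = x ⬝ᵥ S.mulVec x := by rw [dotProduct_comm, hdc x hker]
  have hq0 : 0 ≤ c ⬝ᵥ x := by rw [hq]; exact hSpsd x
  set η : V →L[ℝ] ℝ := ∑ n, c n • φ n with hη
  have hηmem : η ∈ Submodule.span ℝ (Set.range φ) :=
    Submodule.sum_mem _ fun n _ => Submodule.smul_mem _ _ (Submodule.subset_span ⟨n, rfl⟩)
  have hηe : ∀ d : Fin N → ℝ, η (∑ n, d n • e n) = d ⬝ᵥ c := by
    intro d
    simp [hη, hbiorth, dotProduct, ContinuousLinearMap.sum_apply, mul_comm]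
  set ζ : V →L[ℝ] ℝ := η - η.comp Pih with hζ
  have hζmem : ζ ∈ Submodule.span ℝ (Set.range φ) :=
    Submodule.sub_mem _ hηmem (hWstarPih η hηmem)
  have hP0 : ∀ d : Fin N → ℝ, Pih (∑ n, d n • e n) = 0 → P.mulVec d = 0 := by
    intro d hd
    rw [hPih_repr] at hd
    have h2 := Fintype.linearIndependent_iff.1 hehat_indep _ hd
    ext i
    have h3 := h2 i
    simp only [map_sum, map_smul, smul_eq_mul] at h3
    simp only [Matrix.mulVec, dotProduct, hP, Pi.zero_apply]
    rw [← h3]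
    exact Finset.sum_congr rfl fun _ _ => mul_comm _ _
  have hζw : ∀ w ∈ Submodule.span ℝ (Set.range e), ζ w ≤ √(A * (c ⬝ᵥ x)) * ‖w‖ := by
    intro w hw
    have hmem : w - Pih w ∈ Submodule.span ℝ (Set.range e) := Submodule.sub_mem _ hw (hWhat w)
    obtain ⟨d, hd⟩ := (Submodule.mem_span_range_iff_exists_fun ℝ).1 hmem
    have hPd : P.mulVec d = 0 := hP0 d (by rw [hd, map_sub, hidem, sub_self])
    have h1 : ζ w = d ⬝ᵥ S.mulVec x := by
      rw [← hdc d hPd, ← hηe d, hd]; simp [hζ]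
    have h2 := quad_cauchy_aux S hSsymm hSpsd d x
    have h3 := hS_cont d d
    rw [hd] at h3
    have h4 : p (w - Pih w) ≤ ‖w‖ := by
      have h5 := map_sub_le_add p w (Pih w)
      have h6 : p (Pih w) = 0 := (hrange _).2 ⟨w, rfl⟩
      linarith [hple w]
    have h7 : (0:ℝ) ≤ p (w - Pih w) := apply_nonneg p _
    have h8 : d ⬝ᵥ S.mulVec d ≤ A * ‖w‖^2 := by
      have : A * p (w - Pih w) * p (w - Pih w) ≤ A * ‖w‖ * ‖w‖ := by gcongr
      linarith [this, h3, sq ‖w‖, mul_assoc A ‖w‖ ‖w‖, congrArg (A * ·) (sq ‖w‖)]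
    rw [h1]
    refine (abs_le_of_sq_le_sq' ?_ (by positivity)).2
    rw [mul_pow, Real.sq_sqrt (by positivity)]
    rw [← hq] at h2
    calc _ ≤ _ := h2
      _ ≤ A * ‖w‖^2 * (c ⬝ᵥ x) := by gcongr
      _ = _ := by ring
  have hβζ : β * ‖ζ‖ ≤ √(A * (c ⬝ᵥ x)) := by
    refine (hinfsup ζ hζmem).trans (Real.sSup_le ?_ (Real.sqrt_nonneg _))
    rintro _ ⟨w, ⟨hw, hw0⟩, rfl⟩
    exact (div_le_iff₀ (norm_pos_iff.2 hw0)).2 (hζw w hw)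
  have hps : pstar η ≤ Cpoi * ‖ζ‖ := by
    rw [hpstar]
    refine Real.sSup_le ?_ (by positivity)
    rintro _ ⟨v, ⟨hv, hv0⟩, rfl⟩
    have hn := norm_pos_iff.2 hv0
    have hpv := hpoincare v hv
    have hp : 0 < p v := by
      by_contra h
      have : Cpoi * p v ≤ 0 := mul_nonpos_of_nonneg_of_nonpos hCpoi.le (not_lt.1 h)
      linarith
    refine (div_le_iff₀ hp).2 ?_
    have h1 : η v = ζ v := by simp [hζ, hv]
    rw [h1]
    calc ζ v ≤ ‖ζ‖ * ‖v‖ := (le_abs_self _).trans (ζ.le_opNorm v)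
      _ ≤ ‖ζ‖ * (Cpoi * p v) := by gcongr
      _ = _ := by ring
  have hps0 : 0 ≤ pstar η := by
    rw [hpstar]
    rcases Set.eq_empty_or_nonempty {v : V | Pih v = 0 ∧ v ≠ 0} with h | ⟨v, hv, hv0⟩
    · rw [h]; simp
    · apply Real.sSup_nonneg'
      rcases le_total 0 (η v) with h | h
      · exact ⟨_, ⟨v, ⟨hv, hv0⟩, rfl⟩, div_nonneg h (apply_nonneg p v)⟩
      · refine ⟨_, ⟨-v, ⟨by simp [hv], by simpa using hv0⟩, rfl⟩, ?_⟩
        exact div_nonneg (by simpa using h) (apply_nonneg p _)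
  have hfin : β * pstar η ≤ Cpoi * √(A * (c ⬝ᵥ x)) := by
    calc β * pstar η ≤ β * (Cpoi * ‖ζ‖) := by gcongr
      _ = Cpoi * (β * ‖ζ‖) := by ring
      _ ≤ _ := by gcongr
  have hsq := pow_le_pow_left₀ (by positivity) hfin 2
  rw [mul_pow, mul_pow, Real.sq_sqrt (by positivity)] at hsq
  calc Cpoi⁻¹^2 * β^2 * A⁻¹ * (pstar η)^2 = Cpoi⁻¹^2 * A⁻¹ * (β^2 * (pstar η)^2) := by ring
    _ ≤ Cpoi⁻¹^2 * A⁻¹ * (Cpoi^2 * (A * (c ⬝ᵥ x))) := by gcongr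
    _ = c ⬝ᵥ x := by field_simp
end

section
/- Under the stated assumptions, for all η, ζ in W* with coordinate vectors η⃗, ζ⃗, one has η⃗ᵀ S† ζ⃗ ≤ α⁻¹ · p*(η) · p*(ζ). (Upper bound of Proposition 2.7: the bilinear form s*(η, ζ) := ζ⃗ᵀ S† η⃗ is continuous with respect to the dual seminorm p*.) -/
open Matrix

/-- upper bound of Proposition 2.7. With `S†` the reflexive
generalized inverse of the stiffness matrix `S` obtained from the saddle-point
system with constraint matrix `P`, the bilinear form `s*(η,ζ) := ζ⃗ᵀ S† η⃗` on
`W*` is continuous with respect to the dual seminorm `p*`: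
`η⃗ᵀ S† ζ⃗ ≤ α⁻¹ · p*(η) · p*(ζ)`. -/
theorem dual_bilinear_form_continuous
    {V : Type*} [NormedAddCommGroup V] [InnerProductSpace ℝ V] [CompleteSpace V]
    (p : Seminorm ℝ V) (hple : ∀ v : V, p v ≤ ‖v‖)
    (Pih : V →L[ℝ] V) (hidem : ∀ v : V, Pih (Pih v) = Pih v)
    (hrange : ∀ v : V, p v = 0 ↔ ∃ u : V, Pih u = v)
    (Cpoi : ℝ) (hCpoi : 0 < Cpoi)
    (hpoincare : ∀ v : V, Pih v = 0 → ‖v‖ ≤ Cpoi * p v)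
    (pstar : (V →L[ℝ] ℝ) → ℝ)
    (hpstar : ∀ η : V →L[ℝ] ℝ,
      pstar η = sSup ((fun v => η v / p v) '' {v : V | Pih v = 0 ∧ v ≠ 0}))
    (N M : ℕ) (e : Fin N → V) (φ : Fin N → (V →L[ℝ] ℝ))
    (hbiorth : ∀ n m, φ n (e m) = if n = m then 1 else 0)
    -- `Ŵ ⊆ W`: the range of `Π̂` is contained in `W = span (e₁, …, e_N)`
    (hWhat : ∀ u : V, Pih u ∈ Submodule.span ℝ (Set.range e))
    -- `η ∘ Π̂ ∈ W*` for every `η ∈ W* = span (φ₁, …, φ_N)`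
    (hWstarPih : ∀ η : V →L[ℝ] ℝ, η ∈ Submodule.span ℝ (Set.range φ) →
      η.comp Pih ∈ Submodule.span ℝ (Set.range φ))
    -- inf-sup condition between `W*` and `W`
    (β : ℝ) (hβ : 0 < β)
    (hinfsup : ∀ η : V →L[ℝ] ℝ, η ∈ Submodule.span ℝ (Set.range φ) →
      β * ‖η‖ ≤ sSup ((fun w : V => η w / ‖w‖) ''
        {w : V | w ∈ Submodule.span ℝ (Set.range e) ∧ w ≠ 0}))
    -- `ê` is a basis of `Ŵ = range Π̂`, and `Π̂ v = Σᵢ ê*ᵢ(v) êᵢ`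
    (ehat : Fin M → V) (ehatstar : Fin M → (V →L[ℝ] ℝ))
    (hehat_indep : LinearIndependent ℝ ehat)
    (hehat_span : ∀ v : V, (∃ u : V, Pih u = v) ↔
      v ∈ Submodule.span ℝ (Set.range ehat))
    (hPih_repr : ∀ v : V, Pih v = ∑ i, (ehatstar i v) • ehat i)
    -- the matrix `P` with entries `P i m = ê*ᵢ(e_m)`
    (P : Matrix (Fin M) (Fin N) ℝ) (hP : ∀ i m, P i m = ehatstar i (e m))
    -- the stiffness matrix `S`: symmetric, positive semidefinite, and
    -- coercive/continuous with respect to `p` in the coordinates of `W`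
    (S : Matrix (Fin N) (Fin N) ℝ)
    (hSsymm : S = Sᵀ)
    (hSpsd : ∀ x : Fin N → ℝ, 0 ≤ x ⬝ᵥ S.mulVec x)
    (α A : ℝ) (hα : 0 < α) (hA : 0 < A)
    (hS_coercive : ∀ c : Fin N → ℝ, α * (p (∑ n, c n • e n))^2 ≤ c ⬝ᵥ S.mulVec c)
    (hS_cont : ∀ c d : Fin N → ℝ,
      d ⬝ᵥ S.mulVec c ≤ A * p (∑ n, c n • e n) * p (∑ n, d n • e n))
    -- `S†` solves the saddle-point system: `P (S† ξ) = 0` and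
    -- `ξ − S (S† ξ) ∈ range Pᵀ`
    (Sdag : Matrix (Fin N) (Fin N) ℝ)
    (hSdag_ker : ∀ ξ : Fin N → ℝ, P.mulVec (Sdag.mulVec ξ) = 0)
    (hSdag_solve : ∀ ξ : Fin N → ℝ, ∃ lam : Fin M → ℝ,
      ξ - S.mulVec (Sdag.mulVec ξ) = Pᵀ.mulVec lam) :
    ∀ c d : Fin N → ℝ,
      c ⬝ᵥ Sdag.mulVec d ≤
        α⁻¹ * pstar (∑ n, c n • φ n) * pstar (∑ n, d n • φ n) := by
  intro c d
  have hpos : ∀ v : V, Pih v = 0 → v ≠ 0 → 0 < p v := by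
    intro v hv hv0
    have h1 := hpoincare v hv
    have h2 : 0 < ‖v‖ := norm_pos_iff.mpr hv0
    by_contra h
    have h3 : p v ≤ 0 := not_lt.mp h
    nlinarith
  have hbdd : ∀ η : V →L[ℝ] ℝ,
      BddAbove ((fun v => η v / p v) '' {v : V | Pih v = 0 ∧ v ≠ 0}) := by
    intro η
    refine ⟨‖η‖ * Cpoi, ?_⟩
    rintro _ ⟨v, ⟨hv, hv0⟩, rfl⟩
    have hp := hpos v hv hv0
    show η v / p v ≤ _
    rw [div_le_iff₀ hp]
    calc η v ≤ ‖η v‖ := le_abs_self _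
      _ ≤ ‖η‖ * ‖v‖ := η.le_opNorm v
      _ ≤ ‖η‖ * (Cpoi * p v) := by
          exact mul_le_mul_of_nonneg_left (hpoincare v hv) (norm_nonneg _)
      _ = _ := by ring
  have hle : ∀ (η : V →L[ℝ] ℝ) (v : V), Pih v = 0 → v ≠ 0 → η v / p v ≤ pstar η := by
    intro η v hv hv0
    rw [hpstar]
    exact le_csSup (hbdd η) ⟨v, ⟨hv, hv0⟩, rfl⟩
  have heval : ∀ (a x : Fin N → ℝ),
      (∑ n, a n • φ n) (∑ n, x n • e n) = a ⬝ᵥ x := by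
    intro a x
    simp [map_sum, hbiorth, dotProduct, mul_comm]
  set x := Sdag.mulVec d with hx
  set v : V := ∑ n, x n • e n with hvdef
  have hPx : P.mulVec x = 0 := hSdag_ker d
  have hv : Pih v = 0 := by
    rw [hPih_repr]
    refine Finset.sum_eq_zero fun i _ => ?_
    have h1 : ehatstar i v = P.mulVec x i := by
      simp [hvdef, map_sum, Matrix.mulVec, dotProduct, hP, mul_comm]
    rw [h1, hPx]
    simp
  obtain ⟨lam, hlam⟩ := hSdag_solve d
  have hxS : x ⬝ᵥ S.mulVec x = d ⬝ᵥ x := by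
    have h1 : S.mulVec x = d - Pᵀ.mulVec lam := by rw [← hlam]; simp [hx]
    rw [h1, dotProduct_sub, Matrix.dotProduct_mulVec, Matrix.vecMul_transpose, hPx,
      zero_dotProduct, sub_zero, dotProduct_comm]
  have hco := hS_coercive x
  rw [hxS, ← heval d x, ← hvdef] at hco
  rw [← heval c x, ← hvdef]
  by_cases hv0 : v = 0
  · have hnn : ∀ η : V →L[ℝ] ℝ, 0 ≤ pstar η := by
      intro η
      by_cases hex : ∃ u : V, Pih u = 0 ∧ u ≠ 0
      · obtain ⟨u, hu, hu0⟩ := hex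
        have h1 := hle η u hu hu0
        have h2 := hle η (-u) (by simp [hu]) (by simpa using hu0)
        rw [map_neg_eq_map p, ContinuousLinearMap.map_neg, neg_div] at h2
        linarith
      · have : {v : V | Pih v = 0 ∧ v ≠ 0} = ∅ := by
          ext u
          simp only [Set.mem_setOf_eq, Set.mem_empty_iff_false, iff_false]
          exact fun h => hex ⟨u, h⟩
        rw [hpstar, this]
        simp
    rw [hv0, map_zero]
    have := hnn (∑ n, c n • φ n)
    have := hnn (∑ n, d n • φ n)
    positivity
  · have hp := hpos v hv hv0
    have h1 := hle (∑ n, c n • φ n) v hv hv0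
    have h2 := hle (∑ n, d n • φ n) v hv hv0
    have h1n := hle (∑ n, c n • φ n) (-v) (by simp [hv]) (by simpa using hv0)
    rw [map_neg_eq_map p, ContinuousLinearMap.map_neg, neg_div] at h1n
    have hc0 : 0 ≤ pstar (∑ n, c n • φ n) := by linarith
    rw [div_le_iff₀ hp] at h1 h2
    have h3 : α * p v ≤ pstar (∑ n, d n • φ n) := by
      refine le_of_mul_le_mul_right ?_ hp
      nlinarith
    have h4 : p v ≤ α⁻¹ * pstar (∑ n, d n • φ n) := by
      rw [inv_mul_eq_div, le_div_iff₀ hα]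
      linarith
    calc _ ≤ pstar (∑ n, c n • φ n) * p v := h1
      _ ≤ pstar (∑ n, c n • φ n) * (α⁻¹ * pstar (∑ n, d n • φ n)) :=
          mul_le_mul_of_nonneg_left h4 hc0
      _ = _ := by ring
end

section
/- Under the stated assumptions, for every η ∈ V' one has p*(η) = p*(η − η ∘ Π̂) and C_poi⁻¹ · p*(η) ≤ ‖η − η ∘ Π̂‖_{V'} ≤ p*(η), where ‖·‖_{V'} denotes the operator norm on the dual and η ∘ Π̂ ∈ V' is the composition of η with Π̂. -/
/-- With `p*` the dual seminorm of `p` (computed by duality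
against `ker Π̂`), for every `η ∈ V'` one has `p*(η) = p*(η − η ∘ Π̂)` and
`C_poi⁻¹ · p*(η) ≤ ‖η − η ∘ Π̂‖_{V'} ≤ p*(η)`. -/
theorem dual_seminorm_projection_equivalence
    {V : Type*} [NormedAddCommGroup V] [InnerProductSpace ℝ V] [CompleteSpace V]
    (p : Seminorm ℝ V) (hple : ∀ v : V, p v ≤ ‖v‖)
    (Pih : V →L[ℝ] V) (hidem : ∀ v : V, Pih (Pih v) = Pih v)
    (hrange : ∀ v : V, p v = 0 ↔ ∃ u : V, Pih u = v)
    (Cpoi : ℝ) (hCpoi : 0 < Cpoi)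
    (hpoincare : ∀ v : V, Pih v = 0 → ‖v‖ ≤ Cpoi * p v)
    (pstar : (V →L[ℝ] ℝ) → ℝ)
    (hpstar : ∀ η : V →L[ℝ] ℝ,
      pstar η = sSup ((fun v => η v / p v) '' {v : V | Pih v = 0 ∧ v ≠ 0})) :
    ∀ η : V →L[ℝ] ℝ, pstar η = pstar (η - η.comp Pih) ∧
      Cpoi⁻¹ * pstar η ≤ ‖η - η.comp Pih‖ ∧ ‖η - η.comp Pih‖ ≤ pstar η := by
  intro η
  have hpos : ∀ v : V, Pih v = 0 → v ≠ 0 → 0 < p v := by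
    intro v hv hv0
    have h1 := hpoincare v hv
    have h2 : 0 < ‖v‖ := norm_pos_iff.mpr hv0
    exact pos_of_mul_pos_right (lt_of_lt_of_le h2 h1) hCpoi.le
  have heq : ∀ v : V, Pih v = 0 → (η - η.comp Pih) v = η v := by
    intro v hv
    simp [hv]
  have hub : ∀ x ∈ ((fun v => η v / p v) '' {v : V | Pih v = 0 ∧ v ≠ 0}),
      x ≤ Cpoi * ‖η - η.comp Pih‖ := by
    rintro x ⟨v, ⟨hv, hv0⟩, rfl⟩
    have hp := hpos v hv hv0
    show η v / p v ≤ _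
    rw [div_le_iff₀ hp, ← heq v hv]
    calc (η - η.comp Pih) v ≤ ‖(η - η.comp Pih) v‖ := Real.le_norm_self _
      _ ≤ ‖η - η.comp Pih‖ * ‖v‖ := ContinuousLinearMap.le_opNorm _ _
      _ ≤ ‖η - η.comp Pih‖ * (Cpoi * p v) := by gcongr; exact hpoincare v hv
      _ = _ := by ring
  have hle : ∀ v : V, Pih v = 0 → v ≠ 0 → η v ≤ pstar η * p v := by
    intro v hv hv0
    rw [← div_le_iff₀ (hpos v hv hv0), hpstar]
    exact le_csSup ⟨_, hub⟩ ⟨v, ⟨hv, hv0⟩, rfl⟩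
  have habs : ∀ v : V, Pih v = 0 → v ≠ 0 → |η v| ≤ pstar η * p v := by
    intro v hv hv0
    have h1 := hle v hv hv0
    have h2 := hle (-v) (by simp [hv]) (by simpa using hv0)
    rw [map_neg, map_neg_eq_map] at h2
    exact abs_le'.mpr ⟨h1, h2⟩
  have hnn : 0 ≤ pstar η := by
    by_cases h : ∃ v : V, Pih v = 0 ∧ v ≠ 0
    · obtain ⟨v, hv, hv0⟩ := h
      exact nonneg_of_mul_nonneg_left ((abs_nonneg _).trans (habs v hv hv0)) (hpos v hv hv0)
    · have he : {v : V | Pih v = 0 ∧ v ≠ 0} = ∅ := by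
        ext v
        simp only [Set.mem_setOf_eq, Set.mem_empty_iff_false, iff_false]
        exact fun hv => h ⟨v, hv⟩
      rw [hpstar, he]
      simp
  refine ⟨?_, ?_, ?_⟩
  · rw [hpstar, hpstar]
    congr 1
    apply Set.image_congr
    rintro v ⟨hv, -⟩
    rw [heq v hv]
  · rw [inv_mul_le_iff₀ hCpoi, hpstar]
    exact Real.sSup_le hub (by positivity)
  · refine ContinuousLinearMap.opNorm_le_bound _ hnn fun v => ?_
    have hz : (η - η.comp Pih) v = η (v - Pih v) := by simp
    rw [hz, Real.norm_eq_abs]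
    by_cases hw : v - Pih v = 0
    · rw [hw]
      simp only [map_zero, abs_zero]
      positivity
    · refine (habs _ (by simp [hidem]) hw).trans ?_
      gcongr
      have h0 : p (Pih v) = 0 := (hrange _).mpr ⟨v, rfl⟩
      have h1 := map_sub_le_add p v (Pih v)
      linarith [hple v]
end

section
/- Under the stated assumptions, the seminorm p is recovered by duality against functionals annihilating the range of Π̂: for every v ∈ V, p(v) = sup { η(v) : η ∈ V', η ∘ Π̂ = 0, p*(η) ≤ 1 } (with the supremum over the empty set interpreted as 0). -/
/-- The seminorm `p` is recovered by duality against the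
functionals annihilating the range of `Π̂`: for every `v ∈ V`,
`p v = sup { η v : η ∈ V', η ∘ Π̂ = 0, p*(η) ≤ 1 }`. -/
theorem seminorm_recovered_by_duality
    {V : Type*} [NormedAddCommGroup V] [InnerProductSpace ℝ V] [CompleteSpace V]
    (p : Seminorm ℝ V) (hple : ∀ v : V, p v ≤ ‖v‖)
    (Pih : V →L[ℝ] V) (hidem : ∀ v : V, Pih (Pih v) = Pih v)
    (hrange : ∀ v : V, p v = 0 ↔ ∃ u : V, Pih u = v)
    (Cpoi : ℝ) (hCpoi : 0 < Cpoi)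
    (hpoincare : ∀ v : V, Pih v = 0 → ‖v‖ ≤ Cpoi * p v)
    (pstar : (V →L[ℝ] ℝ) → ℝ)
    (hpstar : ∀ η : V →L[ℝ] ℝ,
      pstar η = sSup ((fun v => η v / p v) '' {v : V | Pih v = 0 ∧ v ≠ 0})) :
    ∀ v : V, p v =
      sSup ((fun η : V →L[ℝ] ℝ => η v) ''
        {η : V →L[ℝ] ℝ | η.comp Pih = 0 ∧ pstar η ≤ 1}) := by
  intro v
  have hpos : ∀ w : V, Pih w = 0 → w ≠ 0 → 0 < p w := by
    intro w hw hw0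
    have h1 := hpoincare w hw
    have h2 : 0 < ‖w‖ := norm_pos_iff.mpr hw0
    by_contra h3
    have h4 : Cpoi * p w ≤ 0 := mul_nonpos_of_nonneg_of_nonpos hCpoi.le (not_lt.mp h3)
    linarith
  have hub : ∀ η : V →L[ℝ] ℝ, η.comp Pih = 0 → pstar η ≤ 1 → η v ≤ p v := by
    intro η h0 h1
    have hw : Pih (v - Pih v) = 0 := by rw [map_sub, hidem, sub_self]
    have hη0 : η (Pih v) = 0 := by
      simpa using congrArg (fun f : V →L[ℝ] ℝ => f v) h0
    have hη : η (v - Pih v) = η v := by rw [map_sub, hη0, sub_zero]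
    have hp0 : p (Pih v) = 0 := (hrange _).2 ⟨v, rfl⟩
    have hpw : p (v - Pih v) ≤ p v := by
      have := map_sub_le_add p v (Pih v)
      linarith
    by_cases hw0 : v - Pih v = 0
    · rw [← hη, hw0, map_zero]
      exact apply_nonneg p v
    · have hb : BddAbove ((fun v => η v / p v) '' {v : V | Pih v = 0 ∧ v ≠ 0}) := by
        refine ⟨‖η‖ * Cpoi, ?_⟩
        rintro _ ⟨u, ⟨hu, hu0⟩, rfl⟩
        have hpu := hpos u hu hu0
        show η u / p u ≤ _
        rw [div_le_iff₀ hpu, mul_assoc]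
        calc η u ≤ ‖η u‖ := Real.le_norm_self _
          _ ≤ ‖η‖ * ‖u‖ := η.le_opNorm u
          _ ≤ ‖η‖ * (Cpoi * p u) :=
            mul_le_mul_of_nonneg_left (hpoincare u hu) (norm_nonneg _)
      have h2 : η (v - Pih v) / p (v - Pih v) ≤ 1 := by
        refine le_trans ?_ h1
        rw [hpstar]
        exact le_csSup hb ⟨_, ⟨hw, hw0⟩, rfl⟩
      rw [div_le_one (hpos _ hw hw0)] at h2
      linarith
  have hex : ∃ g : V →ₗ[ℝ] ℝ, g v = p v ∧ ∀ x, g x ≤ p x := by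
    by_cases hv : v = 0
    · exact ⟨0, by simp [hv], fun x => by simp⟩
    · obtain ⟨g, hg1, hg2⟩ := exists_extension_of_le_sublinear
        (LinearPMap.mkSpanSingleton v (p v) hv) p
        (fun c hc x => by rw [map_smul_eq_mul, Real.norm_of_nonneg hc.le])
        (fun x y => map_add_le_add p x y)
        (by
          rintro ⟨x, hx⟩
          obtain ⟨c, rfl⟩ := Submodule.mem_span_singleton.1 hx
          erw [LinearPMap.mkSpanSingleton'_apply]
          show c • p v ≤ p (c • v)
          rw [map_smul_eq_mul, smul_eq_mul]
          exact mul_le_mul_of_nonneg_right (Real.le_norm_self c) (apply_nonneg p v))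
      refine ⟨g, ?_, hg2⟩
      have := hg1 ⟨v, Submodule.mem_span_singleton_self v⟩
      rw [LinearPMap.mkSpanSingleton_apply] at this
      exact this
  obtain ⟨g, hgv, hgp⟩ := hex
  have habs : ∀ x, |g x| ≤ p x := by
    intro x
    rw [abs_le]
    have h1 := hgp (-x)
    rw [map_neg, map_neg_eq_map] at h1
    exact ⟨by linarith, hgp x⟩
  let η : V →L[ℝ] ℝ := g.mkContinuous 1 (fun x => by
    rw [one_mul, Real.norm_eq_abs]
    exact (habs x).trans (hple x))
  have hηg : ∀ x, η x = g x := fun x => rfl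
  have hη0 : η.comp Pih = 0 := by
    ext x
    have h1 := habs (Pih x)
    rw [(hrange _).2 ⟨x, rfl⟩] at h1
    exact abs_nonpos_iff.mp h1
  have hη1 : pstar η ≤ 1 := by
    rw [hpstar]
    refine Real.sSup_le ?_ zero_le_one
    rintro _ ⟨u, ⟨hu, hu0⟩, rfl⟩
    show η u / p u ≤ 1
    rw [div_le_one (hpos u hu hu0)]
    exact hgp u
  symm
  apply IsGreatest.csSup_eq
  refine ⟨⟨η, ⟨hη0, hη1⟩, hgv⟩, ?_⟩
  rintro _ ⟨ξ, ⟨h0, h1⟩, rfl⟩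
  exact hub ξ h0 h1
end

section
/- Suppose β > 0 is such that the two inf-sup conditions hold: β · ‖w‖ ≤ sup { η(w) : η ∈ W*, ‖η‖_{V'} ≤ 1 } for every w ∈ W, and β · ‖η‖_{V'} ≤ sup { η(w) : w ∈ W, ‖w‖ ≤ 1 } for every η ∈ W* (suprema over empty sets interpreted as 0). Then the dimensions of W and W* are equal: dim W = dim W*. -/
/-- A pairing of finite-dimensional spaces, nondegenerate on both sides, forces equal dimension. -/
theorem finrank_eq_of_pairing {X Y : Type*} [AddCommGroup X] [Module ℝ X] [AddCommGroup Y]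
    [Module ℝ Y] [FiniteDimensional ℝ X] [FiniteDimensional ℝ Y] (B : X →ₗ[ℝ] Y →ₗ[ℝ] ℝ)
    (inj1 : Function.Injective B) (inj2 : Function.Injective B.flip) :
    Module.finrank ℝ Y = Module.finrank ℝ X := by
  apply le_antisymm
  · have := LinearMap.finrank_le_finrank_of_injective inj2
    rwa [show Module.finrank ℝ (X →ₗ[ℝ] ℝ) = _ from Subspace.dual_finrank_eq] at this
  · have := LinearMap.finrank_le_finrank_of_injective inj1
    rwa [show Module.finrank ℝ (Y →ₗ[ℝ] ℝ) = _ from Subspace.dual_finrank_eq] at this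

/-- If the two inf-sup conditions hold between
finite-dimensional subspaces `W ⊆ V` and `W* ⊆ V'`, then
`dim W = dim W*`. -/
theorem infsup_implies_equal_dim
    {V : Type*} [NormedAddCommGroup V] [NormedSpace ℝ V]
    (W : Submodule ℝ V) (Wstar : Submodule ℝ (V →L[ℝ] ℝ))
    [FiniteDimensional ℝ W] [FiniteDimensional ℝ Wstar]
    (β : ℝ) (hβ : 0 < β)
    (hinfsup₁ : ∀ w ∈ W, β * ‖w‖ ≤
      sSup ((fun η : V →L[ℝ] ℝ => η w) '' {η : V →L[ℝ] ℝ | η ∈ Wstar ∧ ‖η‖ ≤ 1}))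
    (hinfsup₂ : ∀ η ∈ Wstar, β * ‖η‖ ≤
      sSup ((fun w : V => η w) '' {w : V | w ∈ W ∧ ‖w‖ ≤ 1})) :
    Module.finrank ℝ W = Module.finrank ℝ Wstar := by
  -- the duality pairing restricted to `Wstar × W`
  let B : Wstar →ₗ[ℝ] W →ₗ[ℝ] ℝ := LinearMap.mk₂ ℝ
    (fun η w => (η : V →L[ℝ] ℝ) (w : V))
    (by intros; simp) (by intros; simp) (by intros; simp) (by intros; simp)
  have hB : ∀ η w, B η w = (η : V →L[ℝ] ℝ) (w : V) := fun _ _ => rfl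
  have inj1 : Function.Injective B := by
    rw [injective_iff_map_eq_zero]
    intro η h
    have h2 := hinfsup₂ η η.2
    have h3 : sSup ((fun w : V => (η : V →L[ℝ] ℝ) w) '' {w : V | w ∈ W ∧ ‖w‖ ≤ 1}) ≤ 0 := by
      apply Real.sSup_nonpos
      rintro _ ⟨w, ⟨hw, -⟩, rfl⟩
      have := hB η ⟨w, hw⟩
      rw [h] at this
      exact this.symm.le
    have h4 : ‖(η : V →L[ℝ] ℝ)‖ ≤ 0 := nonpos_of_mul_nonpos_right (h2.trans h3) hβ
    exact Subtype.ext (norm_le_zero_iff.mp h4)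
  have inj2 : Function.Injective B.flip := by
    rw [injective_iff_map_eq_zero]
    intro w h
    have h2 := hinfsup₁ w w.2
    have h3 : sSup ((fun η : V →L[ℝ] ℝ => η (w : V)) ''
        {η : V →L[ℝ] ℝ | η ∈ Wstar ∧ ‖η‖ ≤ 1}) ≤ 0 := by
      apply Real.sSup_nonpos
      rintro _ ⟨η, ⟨hη, -⟩, rfl⟩
      have := hB ⟨η, hη⟩ w
      rw [← LinearMap.flip_apply, h] at this
      exact this.symm.le
    have h4 : ‖(w : V)‖ ≤ 0 := nonpos_of_mul_nonpos_right (h2.trans h3) hβ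
    exact Subtype.ext (norm_le_zero_iff.mp h4)
  exact @finrank_eq_of_pairing Wstar W Wstar.addCommGroup Wstar.module W.addCommGroup W.module
    ‹_› ‹_› B inj1 inj2
end

section
/- Suppose dim W = dim W* and there exists β > 0 such that β · ‖w‖ ≤ sup { η(w) : η ∈ W*, ‖η‖_{V'} ≤ 1 } for every w ∈ W. Then there exists β' > 0 such that β' · ‖η‖_{V'} ≤ sup { η(w) : w ∈ W, ‖w‖ ≤ 1 } for every η ∈ W*; that is, if the two subspaces have the same dimension, either one of the two inf-sup conditions implies the other. -/
/-- An injective linear map from a finite-dimensional normed space is bounded below. -/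
theorem exists_bound_of_ker_eq_bot {E F : Type*} [NormedAddCommGroup E] [NormedSpace ℝ E]
    [NormedAddCommGroup F] [NormedSpace ℝ F] [FiniteDimensional ℝ E]
    (T : E →ₗ[ℝ] F) (hT : LinearMap.ker T = ⊥) :
    ∃ K : ℝ, 0 < K ∧ ∀ x, ‖x‖ ≤ K * ‖T x‖ := by
  obtain ⟨K, hK, hanti⟩ := T.exists_antilipschitzWith hT
  refine ⟨K, by exact_mod_cast hK, fun x => ?_⟩
  have h := hanti.le_mul_dist x 0
  rwa [map_zero, dist_zero_right, dist_zero_right] at h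

/-- An injective pairing between spaces of equal dimension is nondegenerate on the other side. -/
theorem eq_zero_of_pairing {A B : Type*} [AddCommGroup A] [Module ℝ A] [AddCommGroup B]
    [Module ℝ B] [FiniteDimensional ℝ A] [FiniteDimensional ℝ B]
    (S : A →ₗ[ℝ] Module.Dual ℝ B) (hS : Function.Injective S)
    (hdim : Module.finrank ℝ A = Module.finrank ℝ B) (b : B) (hb : ∀ a, S a b = 0) : b = 0 := by
  have hSsurj : Function.Surjective S := by
    refine (LinearMap.injective_iff_surjective_of_finrank_eq_finrank ?_).mp hS
    rw [hdim, Subspace.dual_finrank_eq]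
  rw [← Module.forall_dual_apply_eq_zero_iff ℝ b]
  intro φ
  obtain ⟨w, rfl⟩ := hSsurj φ
  exact hb w

/-- If `dim W = dim W*` and one inf-sup condition holds, then
the other inf-sup condition holds as well (with some positive constant). -/
theorem infsup_transfer_of_equal_dim
    {V : Type*} [NormedAddCommGroup V] [NormedSpace ℝ V]
    (W : Submodule ℝ V) (Wstar : Submodule ℝ (V →L[ℝ] ℝ))
    [FiniteDimensional ℝ W] [FiniteDimensional ℝ Wstar]
    (hdim : Module.finrank ℝ W = Module.finrank ℝ Wstar)
    (β : ℝ) (hβ : 0 < β)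
    (hinfsup₁ : ∀ w ∈ W, β * ‖w‖ ≤
      sSup ((fun η : V →L[ℝ] ℝ => η w) '' {η : V →L[ℝ] ℝ | η ∈ Wstar ∧ ‖η‖ ≤ 1})) :
    ∃ β' : ℝ, 0 < β' ∧ ∀ η ∈ Wstar, β' * ‖η‖ ≤
      sSup ((fun w : V => η w) '' {w : V | w ∈ W ∧ ‖w‖ ≤ 1}) := by
  -- evaluation map, injective by the first inf-sup condition
  let S : W →ₗ[ℝ] Module.Dual ℝ Wstar :=
    { toFun := fun w =>
        { toFun := fun η => (η : V →L[ℝ] ℝ) (w : V)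
          map_add' := fun a b => by simp
          map_smul' := fun c a => by simp }
      map_add' := fun a b => by ext η; simp
      map_smul' := fun c a => by ext η; simp }
  have hS : ∀ (w : W) (η : Wstar), S w η = (η : V →L[ℝ] ℝ) (w : V) := fun _ _ => rfl
  have hSinj : Function.Injective S := by
    rw [injective_iff_map_eq_zero]
    intro w hw
    have h1 := hinfsup₁ w w.2
    have h2 : sSup ((fun η : V →L[ℝ] ℝ => η w) ''
        {η : V →L[ℝ] ℝ | η ∈ Wstar ∧ ‖η‖ ≤ 1}) ≤ 0 := by
      apply Real.sSup_nonpos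
      rintro _ ⟨η, ⟨hη, -⟩, rfl⟩
      have h3 := hS w ⟨η, hη⟩
      rw [hw] at h3
      exact h3.symm.le
    have h4 : ‖(w : V)‖ ≤ 0 := by
      by_contra hcon
      push Not at hcon
      have := mul_pos hβ hcon
      linarith
    have h5 : (w : V) = 0 := norm_le_zero_iff.mp h4
    exact Subtype.ext h5
  -- restriction map to the dual of W
  let T : Wstar →ₗ[ℝ] (W →L[ℝ] ℝ) :=
    { toFun := fun η => (η : V →L[ℝ] ℝ).comp W.subtypeL
      map_add' := fun a b => by ext w; simp
      map_smul' := fun c a => by ext w; simp }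
  have hT : ∀ (η : Wstar) (w : W), T η w = (η : V →L[ℝ] ℝ) (w : V) := fun _ _ => rfl
  have hTker : LinearMap.ker T = ⊥ := by
    rw [LinearMap.ker_eq_bot']
    intro η hη
    exact eq_zero_of_pairing S hSinj hdim η fun w => by
      rw [hS, ← hT, hη]
      rfl
  obtain ⟨K, hKr, hanti⟩ := exists_bound_of_ker_eq_bot (E := Wstar) (F := W →L[ℝ] ℝ) T hTker
  refine ⟨K⁻¹, inv_pos.mpr hKr, ?_⟩
  intro η hη
  set s := sSup ((fun w : V => η w) '' {w : V | w ∈ W ∧ ‖w‖ ≤ 1}) with hs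
  have hbdd : BddAbove ((fun w : V => η w) '' {w : V | w ∈ W ∧ ‖w‖ ≤ 1}) := by
    refine ⟨‖η‖, ?_⟩
    rintro _ ⟨w, ⟨-, hw⟩, rfl⟩
    calc η w ≤ ‖η w‖ := Real.le_norm_self _
      _ ≤ ‖η‖ * ‖w‖ := η.le_opNorm w
      _ ≤ ‖η‖ := mul_le_of_le_one_right (norm_nonneg _) hw
  have hle : ∀ w ∈ W, ‖w‖ ≤ 1 → η w ≤ s := fun w hw h1 =>
    le_csSup hbdd ⟨w, ⟨hw, h1⟩, rfl⟩
  have hs0 : 0 ≤ s := by simpa using hle 0 W.zero_mem (by simp)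
  have hle2 : ∀ w ∈ W, η w ≤ s * ‖w‖ := by
    intro w hw
    rcases eq_or_ne w 0 with rfl | hne
    · simp
    have hp : 0 < ‖w‖ := norm_pos_iff.mpr hne
    have h := hle (‖w‖⁻¹ • w) (W.smul_mem _ hw) (by
      rw [norm_smul, norm_inv, norm_norm, inv_mul_cancel₀ hp.ne'])
    rw [map_smul, smul_eq_mul, inv_mul_le_iff₀ hp] at h
    linarith
  have hTn : ‖T ⟨η, hη⟩‖ ≤ s := by
    refine ContinuousLinearMap.opNorm_le_bound _ hs0 fun w => ?_
    rw [hT, Real.norm_eq_abs]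
    refine abs_le'.mpr ⟨hle2 w w.2, ?_⟩
    have h := hle2 (-w) (W.neg_mem w.2)
    rw [map_neg, norm_neg] at h
    exact h
  have hb' : ‖η‖ ≤ K * ‖T ⟨η, hη⟩‖ := hanti ⟨η, hη⟩
  rw [inv_mul_le_iff₀ hKr]
  exact hb'.trans (mul_le_mul_of_nonneg_left hTn hKr.le)
end

section
/- Suppose β > 0 is such that the two inf-sup conditions hold: β · ‖w‖ ≤ sup { η(w) : η ∈ W*, ‖η‖_{V'} ≤ 1 } for every w ∈ W, and β · ‖η‖_{V'} ≤ sup { η(w) : w ∈ W, ‖w‖ ≤ 1 } for every η ∈ W*. Then for every basis (e_1, …, e_N) of W there exists a family (η_1, …, η_N) of elements of W* satisfying the biorthogonality property η_n(e_m) = 1 if n = m and 0 otherwise; moreover (η_1, …, η_N) is a basis of W*. -/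
/-- Under the two inf-sup conditions, every basis of `W`
admits a biorthogonal family in `W*`, which is moreover a basis of `W*`. -/
theorem infsup_biorthogonal_basis
    {V : Type*} [NormedAddCommGroup V] [NormedSpace ℝ V]
    (W : Submodule ℝ V) (Wstar : Submodule ℝ (V →L[ℝ] ℝ))
    [FiniteDimensional ℝ W] [FiniteDimensional ℝ Wstar]
    (β : ℝ) (hβ : 0 < β)
    (hinfsup₁ : ∀ w ∈ W, β * ‖w‖ ≤
      sSup ((fun η : V →L[ℝ] ℝ => η w) '' {η : V →L[ℝ] ℝ | η ∈ Wstar ∧ ‖η‖ ≤ 1}))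
    (hinfsup₂ : ∀ η ∈ Wstar, β * ‖η‖ ≤
      sSup ((fun w : V => η w) '' {w : V | w ∈ W ∧ ‖w‖ ≤ 1})) :
    ∀ (N : ℕ) (e : Fin N → V), LinearIndependent ℝ e → (∀ n, e n ∈ W) →
      Submodule.span ℝ (Set.range e) = W →
      ∃ η : Fin N → (V →L[ℝ] ℝ), (∀ n, η n ∈ Wstar) ∧
        (∀ n m, η n (e m) = if n = m then 1 else 0) ∧
        LinearIndependent ℝ η ∧ Submodule.span ℝ (Set.range η) = Wstar := by
  intro N e he heW hspan
  have key₁ : ∀ w ∈ W, (∀ η ∈ Wstar, η w = 0) → w = 0 := by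
    intro w hw h
    have h1 := hinfsup₁ w hw
    have h2 : sSup ((fun η : V →L[ℝ] ℝ => η w) '' {η : V →L[ℝ] ℝ | η ∈ Wstar ∧ ‖η‖ ≤ 1}) ≤ 0 := by
      apply Real.sSup_le _ le_rfl
      rintro _ ⟨η, ⟨hη, _⟩, rfl⟩
      exact (h η hη).le
    have h3 : ‖w‖ ≤ 0 := by
      by_contra hc
      have := mul_pos hβ (not_le.mp hc)
      linarith
    exact norm_le_zero_iff.mp h3
  have key₂ : ∀ η ∈ Wstar, (∀ w ∈ W, η w = 0) → η = 0 := by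
    intro η hη h
    have h1 := hinfsup₂ η hη
    have h2 : sSup ((fun w : V => η w) '' {w : V | w ∈ W ∧ ‖w‖ ≤ 1}) ≤ 0 := by
      apply Real.sSup_le _ le_rfl
      rintro _ ⟨w, ⟨hw, _⟩, rfl⟩
      exact (h w hw).le
    have h3 : ‖η‖ ≤ 0 := by
      by_contra hc
      have := mul_pos hβ (not_le.mp hc)
      linarith
    exact norm_le_zero_iff.mp h3
  let T : Wstar →ₗ[ℝ] (Fin N → ℝ) :=
    { toFun := fun η m => (η : V →L[ℝ] ℝ) (e m)
      map_add' := fun a b => by ext m; simp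
      map_smul' := fun a b => by ext m; simp }
  have hTinj : Function.Injective T := by
    intro x y hxy
    apply Subtype.ext
    rw [← sub_eq_zero]
    refine key₂ _ (Wstar.sub_mem x.2 y.2) ?_
    intro w hw
    rw [← hspan] at hw
    induction hw using Submodule.span_induction with
    | mem u hu =>
      obtain ⟨m, rfl⟩ := hu
      have h : (x : V →L[ℝ] ℝ) (e m) = (y : V →L[ℝ] ℝ) (e m) := congrFun hxy m
      simpa [sub_eq_zero] using h
    | zero => simp
    | add u v _ _ hu hv => rw [map_add, hu, hv, add_zero]
    | smul a u _ hu => rw [map_smul, hu, smul_zero]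
  have hTsurj : Function.Surjective T := by
    rw [← LinearMap.range_eq_top]
    by_contra hne
    obtain ⟨f, hf0, hf⟩ := Submodule.exists_le_ker_of_lt_top _ (lt_top_iff_ne_top.mpr hne)
    apply hf0
    have hc : ∑ i, f (Pi.single i 1) • e i = 0 := by
      apply key₁ _ (Submodule.sum_mem _ fun i _ => W.smul_mem _ (heW i))
      intro η hη
      have h1 : f (T ⟨η, hη⟩) = 0 := hf ⟨_, rfl⟩
      rw [LinearMap.pi_apply_eq_sum_univ f] at h1
      rw [map_sum, ← h1]
      refine Finset.sum_congr rfl fun i _ => ?_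
      rw [map_smul, smul_eq_mul, smul_eq_mul, mul_comm]
      congr 2
      ext j
      simp [Pi.single_apply, eq_comm]
    have h0 := Fintype.linearIndependent_iff.mp he _ hc
    apply LinearMap.pi_ext'
    intro i
    ext
    simpa using h0 i
  have hex : ∀ n, ∃ x : Wstar, T x = Pi.single n 1 := fun n => hTsurj _
  choose b hb using hex
  have hbi : ∀ n m, (b n : V →L[ℝ] ℝ) (e m) = if n = m then 1 else 0 := by
    intro n m
    have h : (b n : V →L[ℝ] ℝ) (e m) = (Pi.single n 1 : Fin N → ℝ) m := congrFun (hb n) m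
    rw [h, Pi.single_apply]
    simp only [eq_comm]
  refine ⟨fun n => (b n : V →L[ℝ] ℝ), fun n => (b n).2, hbi, ?_, ?_⟩
  · rw [Fintype.linearIndependent_iff]
    intro g hg m
    have h := congrArg (fun η : V →L[ℝ] ℝ => η (e m)) hg
    simpa [hbi] using h
  · apply le_antisymm
    · rw [Submodule.span_le]
      rintro _ ⟨n, rfl⟩
      exact (b n).2
    · intro η hη
      have hs : ∑ i, η (e i) • (b i : V →L[ℝ] ℝ) ∈ Wstar :=
        Submodule.sum_mem _ fun i _ => Wstar.smul_mem _ (b i).2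
      have h : (⟨η, hη⟩ : Wstar) = ⟨_, hs⟩ := by
        apply hTinj
        funext m
        change η (e m) = (∑ i, η (e i) • (b i : V →L[ℝ] ℝ)) (e m)
        simp [hbi]
      have h' : η = ∑ i, η (e i) • (b i : V →L[ℝ] ℝ) := congrArg Subtype.val h
      rw [h']
      exact Submodule.sum_mem _ fun i _ =>
        Submodule.smul_mem _ _ (Submodule.subset_span ⟨i, rfl⟩)
end

section
/- Under the stated assumptions, for every η ∈ W* one has C_poi⁻¹ · β · p*(η) ≤ sup { η(w) / p(w) : w ∈ W, Π̂ w = 0, w ≠ 0 } ≤ p*(η) (with the supremum over the empty set interpreted as 0); that is, on W* the dual seminorm p* is equivalent to its restriction computed by duality against W ∩ ker Π̂ alone. -/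
/-- On `W*`, the dual seminorm `p*` is equivalent to the
seminorm computed by duality against `W ∩ ker Π̂` alone:
`C_poi⁻¹ · β · p*(η) ≤ sup { η(w)/p(w) : w ∈ W ∩ ker Π̂, w ≠ 0 } ≤ p*(η)`. -/
theorem dual_seminorm_equivalence_on_discrete_space
    {V : Type*} [NormedAddCommGroup V] [InnerProductSpace ℝ V] [CompleteSpace V]
    (p : Seminorm ℝ V) (hple : ∀ v : V, p v ≤ ‖v‖)
    (Pih : V →L[ℝ] V) (hidem : ∀ v : V, Pih (Pih v) = Pih v)
    (hrange : ∀ v : V, p v = 0 ↔ ∃ u : V, Pih u = v)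
    (Cpoi : ℝ) (hCpoi : 0 < Cpoi)
    (hpoincare : ∀ v : V, Pih v = 0 → ‖v‖ ≤ Cpoi * p v)
    (pstar : (V →L[ℝ] ℝ) → ℝ)
    (hpstar : ∀ η : V →L[ℝ] ℝ,
      pstar η = sSup ((fun v => η v / p v) '' {v : V | Pih v = 0 ∧ v ≠ 0}))
    (W : Submodule ℝ V) (Wstar : Submodule ℝ (V →L[ℝ] ℝ))
    [FiniteDimensional ℝ W] [FiniteDimensional ℝ Wstar]
    (hWhat : ∀ u : V, Pih u ∈ W)
    (hWstarPih : ∀ η : V →L[ℝ] ℝ, η ∈ Wstar → η.comp Pih ∈ Wstar)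
    (β : ℝ) (hβ : 0 < β)
    (hinfsup : ∀ η ∈ Wstar, β * ‖η‖ ≤
      sSup ((fun w : V => η w / ‖w‖) '' {w : V | w ∈ W ∧ w ≠ 0})) :
    ∀ η : V →L[ℝ] ℝ, η ∈ Wstar →
      Cpoi⁻¹ * β * pstar η ≤
          sSup ((fun w : V => η w / p w) ''
            {w : V | w ∈ W ∧ Pih w = 0 ∧ w ≠ 0}) ∧
        sSup ((fun w : V => η w / p w) ''
            {w : V | w ∈ W ∧ Pih w = 0 ∧ w ≠ 0}) ≤ pstar η := by
  intro η hη
  have hp0 : ∀ v : V, Pih v = 0 → v ≠ 0 → 0 < p v := by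
    intro v hv hne
    have h1 := hpoincare v hv
    have h2 : 0 < ‖v‖ := norm_pos_iff.mpr hne
    by_contra hcon
    push Not at hcon
    nlinarith [mul_nonneg hCpoi.le (sub_nonneg.mpr hcon)]
  have hbound : ∀ ζ : V →L[ℝ] ℝ, ∀ v : V, Pih v = 0 → v ≠ 0 → ζ v / p v ≤ Cpoi * ‖ζ‖ := by
    intro ζ v hv hne
    rw [div_le_iff₀ (hp0 v hv hne)]
    calc ζ v ≤ ‖ζ v‖ := Real.le_norm_self _
      _ ≤ ‖ζ‖ * ‖v‖ := ζ.le_opNorm v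
      _ ≤ ‖ζ‖ * (Cpoi * p v) := mul_le_mul_of_nonneg_left (hpoincare v hv) (norm_nonneg _)
      _ = Cpoi * ‖ζ‖ * p v := by ring
  have hbddV : BddAbove ((fun v => η v / p v) '' {v : V | Pih v = 0 ∧ v ≠ 0}) := by
    refine ⟨Cpoi * ‖η‖, ?_⟩
    rintro _ ⟨v, ⟨hv, hne⟩, rfl⟩
    exact hbound η v hv hne
  have hsub : ((fun w : V => η w / p w) '' {w : V | w ∈ W ∧ Pih w = 0 ∧ w ≠ 0}) ⊆
      ((fun v => η v / p v) '' {v : V | Pih v = 0 ∧ v ≠ 0}) :=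
    Set.image_mono fun w hw => hw.2
  have hbddW := hbddV.mono hsub
  have hnonneg : ∀ K : Set V, (∀ v ∈ K, -v ∈ K) → BddAbove ((fun v => η v / p v) '' K) →
      0 ≤ sSup ((fun v => η v / p v) '' K) := by
    intro K hK hb
    rcases K.eq_empty_or_nonempty with rfl | ⟨v, hv⟩
    · simp
    · have h1 := le_csSup hb ⟨v, hv, rfl⟩
      have h2 := le_csSup hb ⟨-v, hK v hv, rfl⟩
      simp only [map_neg, map_neg_eq_map, neg_div] at h1 h2
      linarith
  have hV0 := hnonneg _ (by rintro v ⟨h1, h2⟩; exact ⟨by simp [h1], by simpa using h2⟩) hbddV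
  have hW0 := hnonneg _ (by
    rintro v ⟨h0, h1, h2⟩
    exact ⟨W.neg_mem h0, by simp [h1], by simpa using h2⟩) hbddW
  rw [hpstar η]
  refine ⟨?_, Real.sSup_le (fun x hx => le_csSup hbddV (hsub hx)) hV0⟩
  set S := sSup ((fun w : V => η w / p w) '' {w : V | w ∈ W ∧ Pih w = 0 ∧ w ≠ 0}) with hS
  set ξ : V →L[ℝ] ℝ := η - η.comp Pih with hξdef
  have hξ : ξ ∈ Wstar := Wstar.sub_mem hη (hWstarPih η hη)
  have hA : sSup ((fun v => η v / p v) '' {v : V | Pih v = 0 ∧ v ≠ 0}) ≤ Cpoi * ‖ξ‖ := by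
    refine Real.sSup_le ?_ (by positivity)
    rintro _ ⟨v, ⟨hv, hne⟩, rfl⟩
    have h := hbound ξ v hv hne
    have e : ξ v = η v := by simp [hξdef, hv]
    rw [e] at h
    exact h
  have hB : β * ‖ξ‖ ≤ S := by
    refine (hinfsup ξ hξ).trans (Real.sSup_le ?_ hW0)
    rintro _ ⟨w, ⟨hw, hne⟩, rfl⟩
    have hwpos : 0 < ‖w‖ := norm_pos_iff.mpr hne
    have e : ξ w = η (w - Pih w) := by simp [hξdef]
    have hk : Pih (w - Pih w) = 0 := by simp [hidem]
    show ξ w / ‖w‖ ≤ S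
    rw [div_le_iff₀ hwpos, e]
    by_cases h0 : w - Pih w = 0
    · rw [h0, map_zero]
      positivity
    · have h1 : η (w - Pih w) / p (w - Pih w) ≤ S :=
        le_csSup hbddW ⟨w - Pih w, ⟨W.sub_mem hw (hWhat w), hk, h0⟩, rfl⟩
      rw [div_le_iff₀ (hp0 _ hk h0)] at h1
      have h2 : p (w - Pih w) ≤ ‖w‖ := by
        have h3 := map_sub_le_add p w (Pih w)
        have h4 : p (Pih w) = 0 := (hrange _).2 ⟨w, rfl⟩
        linarith [hple w]
      exact h1.trans (mul_le_mul_of_nonneg_left h2 hW0)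
  refine le_trans ?_ hB
  calc Cpoi⁻¹ * β * sSup ((fun v => η v / p v) '' {v : V | Pih v = 0 ∧ v ≠ 0})
      ≤ Cpoi⁻¹ * β * (Cpoi * ‖ξ‖) := mul_le_mul_of_nonneg_left hA (by positivity)
    _ = β * ‖ξ‖ := by field_simp
end

section
/- For every a ∈ (0,1), the 2×2 real matrix M defined below is symmetric, and its eigenvalues are exactly 1 + g(a) and 1 − g(a), where g(a) := √(a+1) · (3a² − 3a + 1) / (2 · √(2−a) · (a − a³)); equivalently, the characteristic polynomial of M is (X − (1 + g(a))) · (X − (1 − g(a))). -/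
open Matrix Polynomial

/-- For every `a ∈ (0,1)`, the symmetrized scaled local
Gramian matrix `M = (1/2) D^{-1/2} (H G H⁻¹ + H⁻¹ Gᵀ H) D^{-1/2}` arising from
the Steinbach projector with `s = 1/2` is symmetric and its eigenvalues are
exactly `1 + g(a)` and `1 − g(a)`, where
`g(a) = √(a+1)·(3a² − 3a + 1) / (2·√(2−a)·(a − a³))`; equivalently, its
characteristic polynomial is `(X − (1 + g(a)))·(X − (1 − g(a)))`. -/
theorem steinbach_local_matrix_eigenvalues
    (a : ℝ) (ha0 : 0 < a) (ha1 : a < 1)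
    (G D Dinvhalf H Hinv M : Matrix (Fin 2) (Fin 2) ℝ)
    (hG : G = (1/2 : ℝ) • !![(2-a)*a, a^2; (1-a)^2, 1-a^2])
    (hD : D = !![(2-a)*a/2, 0; 0, (1-a^2)/2])
    (hDinvhalf : Dinvhalf = !![((2-a)*a/2)^((-1 : ℝ)/2), 0; 0, ((1-a^2)/2)^((-1 : ℝ)/2)])
    (hH : H = !![Real.sqrt (2*a), 0; 0, Real.sqrt (2*(1-a))])
    (hHinv : Hinv = !![(2*a)^((-1 : ℝ)/2), 0; 0, (2*(1-a))^((-1 : ℝ)/2)])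
    (hM : M = (1/2 : ℝ) • (Dinvhalf * (H * G * Hinv + Hinv * Gᵀ * H) * Dinvhalf))
    (g : ℝ)
    (hg : g = Real.sqrt (a+1) * (3*a^2 - 3*a + 1) /
      (2 * Real.sqrt (2-a) * (a - a^3))) :
    Mᵀ = M ∧ M.charpoly = (X - C (1 + g)) * (X - C (1 - g)) := by
  have hr : ∀ x : ℝ, 0 < x → x ^ ((-1 : ℝ)/2) = (Real.sqrt x)⁻¹ := by
    intro x hx
    rw [Real.sqrt_eq_rpow, ← Real.rpow_neg hx.le]
    norm_num
  have h1 : 0 < 1 - a := by linarith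
  have h2 : 0 < 2 - a := by linarith
  have h3 : 0 < a + 1 := by linarith
  have e2 : (1 - a^2) / 2 = (1 - a) * (a + 1) / 2 := by ring
  have key : M = !![1, g; g, 1] := by
    rw [hr _ (by positivity), hr _ (by rw [e2]; positivity)] at hDinvhalf
    rw [hr _ (by positivity), hr _ (by positivity)] at hHinv
    rw [e2, Real.sqrt_div (by positivity), Real.sqrt_div (by positivity),
      Real.sqrt_mul h2.le, Real.sqrt_mul h1.le] at hDinvhalf
    rw [Real.sqrt_mul (by norm_num), Real.sqrt_mul (by norm_num)] at hHinv hH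
    have p0 := Real.sqrt_pos.2 ha0
    have q0 := Real.sqrt_pos.2 h1
    have r0 := Real.sqrt_pos.2 h2
    have s0 := Real.sqrt_pos.2 h3
    have t0 : 0 < Real.sqrt 2 := by positivity
    have p2 := Real.sq_sqrt ha0.le
    have q2 := Real.sq_sqrt h1.le
    have r2 := Real.sq_sqrt h2.le
    have s2 := Real.sq_sqrt h3.le
    have t2 : Real.sqrt 2 ^ 2 = 2 := Real.sq_sqrt (by norm_num)
    have e3 : a - a^3 = a * (1 - a) * (a + 1) := by ring
    rw [e3] at hg
    generalize Real.sqrt a = p at *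
    generalize Real.sqrt (1 - a) = q at *
    generalize Real.sqrt (2 - a) = r at *
    generalize Real.sqrt (a + 1) = s at *
    generalize Real.sqrt 2 = t at *
    have off : 1/2 * ((r * p / t)⁻¹ * ((t * p) * (1/2 * a^2) * (t * q)⁻¹
        + (t * p)⁻¹ * (1/2 * (1-a)^2) * (t * q)) * (q * s / t)⁻¹) = g := by
      have : g = (3*a^2 - 3*a + 1) / (2 * r * (p^2 * q^2 * s)) := by
        rw [hg, p2, q2, ← s2]
        field_simp
      rw [this]
      field_simp
      rw [t2, p2, q2]
      ring
    have d1 : 1/2 * ((r * p / t)⁻¹ * ((t * p) * (1/2 * ((2-a)*a)) * (t * p)⁻¹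
        + (t * p)⁻¹ * (1/2 * ((2-a)*a)) * (t * p)) * (r * p / t)⁻¹) = 1 := by
      rw [← r2, ← p2]
      field_simp
      rw [t2]
      norm_num
    have d2 : 1/2 * ((q * s / t)⁻¹ * ((t * q) * (1/2 * (1-a^2)) * (t * q)⁻¹
        + (t * q)⁻¹ * (1/2 * (1-a^2)) * (t * q)) * (q * s / t)⁻¹) = 1 := by
      rw [show 1 - a^2 = q^2 * s^2 by rw [q2, s2]; ring]
      field_simp
      rw [t2]
      norm_num
    simp only [inv_div] at off d1 d2
    have hGt : Gᵀ = (1/2 : ℝ) • !![(2-a)*a, (1-a)^2; a^2, 1-a^2] := by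
      rw [hG]
      ext i j
      fin_cases i <;> fin_cases j <;> rfl
    rw [hM, hGt, hDinvhalf, hH, hHinv, hG]
    ext i j
    fin_cases i <;> fin_cases j <;>
      simp
    · linear_combination d1
    · linear_combination off
    · linear_combination off
    · linear_combination d2
  rw [key]
  constructor
  · ext i j
    fin_cases i <;> fin_cases j <;> rfl
  · rw [Matrix.charpoly_fin_two]
    simp [Matrix.trace_fin_two, Matrix.det_fin_two]
    ring
end

section
/- For every integer k ≥ 1 there exists a constant c > 0, depending only on k, with the following property: for every real polynomial η of degree at most k−1 with η ≠ 0, there exists a real polynomial q of degree at most k+1 with q(0) = 0, q(1) = 0, q ≠ 0, and ∫₀¹ η(x)·q(x) dx ≥ c · (∫₀¹ η(x)² dx)^{1/2} · (∫₀¹ q(x)² dx)^{1/2}. (Inf-sup stability between polynomials of degree ≤ k−1 and polynomials of degree ≤ k+1 vanishing at the endpoints of the reference interval, in the L²(0,1) norm.) -/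
open Polynomial in
/-- A nonzero polynomial has positive weighted square integral. -/
lemma infsup_pos (w : ℝ → ℝ) (hw : Continuous w) (hw0 : ∀ x ∈ Set.Ioo (0:ℝ) 1, 0 < w x)
    (hw1 : ∀ x ∈ Set.Icc (0:ℝ) 1, 0 ≤ w x) (p : Polynomial ℝ) (hp : p ≠ 0) :
    0 < ∫ x in (0:ℝ)..1, w x * (p.eval x)^2 := by
  obtain ⟨y, hy, hy'⟩ : ∃ y ∈ Set.Ioo (0:ℝ) 1, p.eval y ≠ 0 := by
    by_contra! h
    apply hp
    apply Polynomial.eq_zero_of_infinite_isRoot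
    exact (Set.Ioo_infinite (by norm_num : (0:ℝ) < 1)).mono (fun x hx => h x hx)
  apply intervalIntegral.integral_pos (by norm_num)
  · exact (hw.mul (p.continuous.pow 2)).continuousOn
  · intro x hx
    exact mul_nonneg (hw1 x ⟨hx.1.le, hx.2⟩) (sq_nonneg _)
  · refine ⟨y, ⟨hy.1.le, hy.2.le⟩, ?_⟩
    have := hw0 y hy
    positivity

/-- The polynomial with given coefficients. -/
noncomputable def infsupPoly (k : ℕ) (a : Fin k → ℝ) : Polynomial ℝ :=
  ∑ i : Fin k, Polynomial.C (a i) * Polynomial.X ^ (i : ℕ)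

lemma infsupPoly_eval (k : ℕ) (a : Fin k → ℝ) (x : ℝ) :
    (infsupPoly k a).eval x = ∑ i : Fin k, a i * x ^ (i : ℕ) := by
  simp [infsupPoly, Polynomial.eval_finsetSum]

lemma infsupPoly_ne (k : ℕ) (a : Fin k → ℝ) (ha : a ≠ 0) : infsupPoly k a ≠ 0 := by
  intro h
  apply ha
  ext j
  have := congrArg (fun p => Polynomial.coeff p (j : ℕ)) h
  simpa [infsupPoly, Polynomial.finsetSum_coeff, Polynomial.coeff_X_pow, Fin.val_inj] using this

lemma infsup_cont (k : ℕ) (w : ℝ → ℝ) (hw : Continuous w) :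
    Continuous (fun a : Fin k → ℝ => ∫ x in (0:ℝ)..1, w x * ((infsupPoly k a).eval x)^2) := by
  simp only [infsupPoly_eval]
  apply intervalIntegral.continuous_parametric_intervalIntegral_of_continuous'
  simp only [Function.uncurry_def]
  fun_prop

lemma infsup_hom (k : ℕ) (w : ℝ → ℝ) (t : ℝ) (a : Fin k → ℝ) :
    ∫ x in (0:ℝ)..1, w x * ((infsupPoly k (t • a)).eval x)^2
      = t^2 * ∫ x in (0:ℝ)..1, w x * ((infsupPoly k a).eval x)^2 := by
  rw [← intervalIntegral.integral_const_mul]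
  congr 1
  ext x
  have : (infsupPoly k (t • a)).eval x = t * (infsupPoly k a).eval x := by
    simp only [infsupPoly_eval, Finset.mul_sum, Pi.smul_apply, smul_eq_mul, mul_assoc]
  rw [this]
  ring

lemma infsup_equiv (k : ℕ) (hk : 1 ≤ k) : ∃ c : ℝ, 0 < c ∧ ∀ a : Fin k → ℝ, a ≠ 0 →
    c * ∫ x in (0:ℝ)..1, 1 * ((infsupPoly k a).eval x)^2 ≤
      ∫ x in (0:ℝ)..1, (x * (1 - x)) * ((infsupPoly k a).eval x)^2 := by
  have hF := infsup_cont k (fun x => x * (1 - x)) (by fun_prop)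
  have hG := infsup_cont k (fun _ => 1) (by fun_prop)
  have hFpos : ∀ a : Fin k → ℝ, a ≠ 0 →
      0 < ∫ x in (0:ℝ)..1, (x * (1 - x)) * ((infsupPoly k a).eval x)^2 := fun a ha =>
    infsup_pos (fun x => x * (1 - x)) (by fun_prop)
      (fun x hx => mul_pos hx.1 (by linarith [hx.2]))
      (fun x hx => mul_nonneg hx.1 (by linarith [hx.2])) _ (infsupPoly_ne k a ha)
  have hGpos : ∀ a : Fin k → ℝ, a ≠ 0 →
      0 < ∫ x in (0:ℝ)..1, 1 * ((infsupPoly k a).eval x)^2 := fun a ha =>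
    infsup_pos (fun _ => 1) (by fun_prop) (by simp) (by simp) _ (infsupPoly_ne k a ha)
  have hne : ∀ a ∈ Metric.sphere (0 : Fin k → ℝ) 1, a ≠ 0 := by
    rintro a ha rfl
    simp at ha
  have : Nonempty (Fin k) := ⟨⟨0, hk⟩⟩
  have hS : (Metric.sphere (0 : Fin k → ℝ) 1).Nonempty :=
    NormedSpace.sphere_nonempty.2 zero_le_one
  obtain ⟨a₀, ha₀, hmin⟩ := (isCompact_sphere (0 : Fin k → ℝ) 1).exists_isMinOn hS
    (hF.continuousOn.div hG.continuousOn (fun a ha => (hGpos a (hne a ha)).ne'))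
  refine ⟨_, div_pos (hFpos a₀ (hne a₀ ha₀)) (hGpos a₀ (hne a₀ ha₀)), fun a ha => ?_⟩
  have hn : ‖a‖ ≠ 0 := norm_ne_zero_iff.2 ha
  have hb : (‖a‖⁻¹ • a) ∈ Metric.sphere (0 : Fin k → ℝ) 1 := by
    simp [norm_smul, hn]
  have h := hmin hb
  simp only [Set.mem_ofPred_eq, Pi.div_apply] at h
  rw [le_div_iff₀ (hGpos _ (hne _ hb)), infsup_hom k (fun x => x * (1 - x)),
    infsup_hom k (fun _ => 1)] at h
  have h2 : 0 < (‖a‖⁻¹)^2 := by positivity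
  refine le_of_mul_le_mul_left ?_ h2
  linarith


/-- Inf-sup stability between polynomials of degree `≤ k−1`
and polynomials of degree `≤ k+1` vanishing at the endpoints of the reference
interval `[0,1]`, in the `L²(0,1)` norm: for every `k ≥ 1` there is a constant
`c > 0`, depending only on `k`, such that every nonzero polynomial `η` of
degree at most `k−1` admits a nonzero polynomial `q` of degree at most `k+1`
with `q(0) = q(1) = 0` and
`∫₀¹ η q ≥ c · ‖η‖_{L²(0,1)} · ‖q‖_{L²(0,1)}`. -/
theorem polynomial_infsup_reference_interval :
    ∀ k : ℕ, 1 ≤ k → ∃ c : ℝ, 0 < c ∧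
      ∀ η : Polynomial ℝ, η.natDegree ≤ k - 1 → η ≠ 0 →
        ∃ q : Polynomial ℝ, q.natDegree ≤ k + 1 ∧ q.eval 0 = 0 ∧ q.eval 1 = 0 ∧
          q ≠ 0 ∧
          c * Real.sqrt (∫ x in (0:ℝ)..1, (η.eval x)^2) *
              Real.sqrt (∫ x in (0:ℝ)..1, (q.eval x)^2) ≤
            ∫ x in (0:ℝ)..1, η.eval x * q.eval x := by
  intro k hk
  obtain ⟨c, hc, H⟩ := infsup_equiv k hk
  refine ⟨c, hc, fun η hη hη0 => ?_⟩
  have hrep : infsupPoly k (fun i => η.coeff i) = η := by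
    conv_rhs => rw [η.as_sum_range_C_mul_X_pow' (n := k) (by omega)]
    rw [infsupPoly, Fin.sum_univ_eq_sum_range (fun i => Polynomial.C (η.coeff i) * Polynomial.X ^ i)]
  have h := H (fun i => η.coeff i) (by
    intro h0
    apply hη0
    rw [← hrep, h0]
    simp [infsupPoly])
  rw [hrep] at h
  simp only [one_mul] at h
  have hw : (Polynomial.X * (1 - Polynomial.X) : Polynomial ℝ) ≠ 0 := by
    intro h0
    have := congrArg (Polynomial.eval (1/2)) h0
    norm_num at this
  refine ⟨Polynomial.X * (1 - Polynomial.X) * η, ?_, by simp, by simp, mul_ne_zero hw hη0, ?_⟩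
  · have h1 : (Polynomial.X * (1 - Polynomial.X) : Polynomial ℝ).natDegree ≤ 2 := by
      compute_degree
    have := Polynomial.natDegree_mul_le (p := (Polynomial.X * (1 - Polynomial.X) : Polynomial ℝ)) (q := η)
    omega
  · have hQ : ∫ x in (0:ℝ)..1, ((Polynomial.X * (1 - Polynomial.X) * η).eval x)^2 ≤
        ∫ x in (0:ℝ)..1, (η.eval x)^2 := by
      apply intervalIntegral.integral_mono_on (by norm_num)
      · exact (Continuous.pow (Polynomial.continuous _) 2).intervalIntegrable _ _
      · exact (Continuous.pow (Polynomial.continuous _) 2).intervalIntegrable _ _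
      · intro x hx
        simp only [Polynomial.eval_mul, Polynomial.eval_X, Polynomial.eval_sub,
          Polynomial.eval_one, mul_pow (x * (1 - x))]
        have h0 : 0 ≤ x * (1 - x) := mul_nonneg hx.1 (by linarith [hx.2])
        have h1 : x * (1 - x) ≤ 1 := by nlinarith [hx.1, hx.2]
        exact mul_le_of_le_one_left (sq_nonneg _) (pow_le_one₀ h0 h1)
    have hG : 0 ≤ ∫ x in (0:ℝ)..1, (η.eval x)^2 :=
      intervalIntegral.integral_nonneg (by norm_num) (fun x _ => sq_nonneg _)
    calc _ ≤ c * Real.sqrt (∫ x in (0:ℝ)..1, (η.eval x)^2) *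
              Real.sqrt (∫ x in (0:ℝ)..1, (η.eval x)^2) := by
            gcongr
      _ = c * ∫ x in (0:ℝ)..1, (η.eval x)^2 := by
            rw [mul_assoc, Real.mul_self_sqrt hG]
      _ ≤ _ := h
      _ = _ := by
            congr 1
            ext x
            simp
            ring
end
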